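/- Let n ∈ ℝ_{>0}, let Λ ⊂ ℚ² be a rational lattice with standard basis (b₁, b₂), and let p ∈ H_n with p − b₂ ∉ H_n. Then the pair (b₁, −b₂) is a right search basis for p in H_n ∩ (p+Λ): that is, (b₁)ₓ > 0, (−b₂)ₓ ≥ 0, det(b₁, −b₂) < 0, p + b₁ ∈ H_n, p + (−b₂) ∉ H_n, and Minsl(p) lies in the closed cone generated by {b₁, −b₂}. -/

import Mathlib

/-!
For vectors `u, v` with nonnegative `x`-coordinate, comparing slopes is a sign condition on
`det(u, v)`, so by Cramer's rule the cone generated by `v` and `w` with `det(v, w) < 0` contains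
every `u` with `slope w ≤ slope u ≤ slope v`. Apply this to `u = Minsl(p)`, `v = b₁`, `w = -b₂`.
The lower bound on the slope holds because `-b₂` has slope `-∞`. The upper bound holds because
`b₁` itself competes in the minimum defining `Minsl(p)`: it has nonnegative coordinates, and `H_n`
is closed under adding such vectors.
-/

noncomputable section

/-- The closed region on and above the positive branch of the hyperbola `x*y = n`. -/
def Hset (n : ℝ) : Set (ℝ × ℝ) := {q | 0 ≤ q.1 ∧ 0 ≤ q.2 ∧ n ≤ q.1 * q.2}

/-- A point of `ℝ²` with rational coordinates. -/
def ratPoint (q : ℝ × ℝ) : Prop := ∃ a b : ℚ, q = ((a : ℝ), (b : ℝ))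

/-- The lattice generated by two vectors `v, w`. -/
def latticeOf (v w : ℝ × ℝ) : Set (ℝ × ℝ) :=
  {q | ∃ a b : ℤ, q = (a : ℝ) • v + (b : ℝ) • w}

/-- `(b₁, b₂)` is the standard basis of the lattice `Λ`: a basis with
`b₂ₓ = 0`, `b₁ₓ > 0`, `b₂ᵧ > 0` and `0 ≤ b₁ᵧ < b₂ᵧ`. -/
def IsStdBasis (Λ : Set (ℝ × ℝ)) (b₁ b₂ : ℝ × ℝ) : Prop :=
  Λ = latticeOf b₁ b₂ ∧ b₂.1 = 0 ∧ 0 < b₁.1 ∧ 0 < b₂.2 ∧ 0 ≤ b₁.2 ∧ b₁.2 < b₂.2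

/-- Slope comparison for vectors with nonnegative `x`-coordinate (where vertical
vectors pointing down have slope `-∞` and vertical vectors pointing up `+∞`):
`slope u ≤ slope v` iff `u_y v_x ≤ v_y u_x`. -/
def slopeLE (u v : ℝ × ℝ) : Prop := u.2 * v.1 ≤ v.2 * u.1

/-- `ms = Minsl(p)`: the primitive nonzero vector of smallest slope in
`(H_n ∩ (p+Λ) - p) ∩ {x ≥ 0} ⊆ Λ`. -/
def IsMinsl (n : ℝ) (Λ : Set (ℝ × ℝ)) (p ms : ℝ × ℝ) : Prop :=
  ms ∈ Λ ∧ ms ≠ 0 ∧ 0 ≤ ms.1 ∧ p + ms ∈ Hset n ∧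
  (∀ u ∈ Λ, ∀ k : ℤ, 2 ≤ k → ms ≠ (k : ℝ) • u) ∧
  ∀ u ∈ Λ, u ≠ 0 → 0 ≤ u.1 → p + u ∈ Hset n → slopeLE ms u

section

variable {n : ℝ} {Λ : Set (ℝ × ℝ)} {p b₁ b₂ u v w : ℝ × ℝ}

/-- `(v, w)` is a right search basis for `p` in `H_n ∩ (p + Λ)`. The last clause, that `Minsl(p)`
lies in the closed cone generated by `v` and `w`, is imposed on every vector that satisfies
`IsMinsl`, and so is vacuous when there is none. -/
def IsRightSearchBasis (n : ℝ) (Λ : Set (ℝ × ℝ)) (p v w : ℝ × ℝ) : Prop :=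
  0 < v.1 ∧ 0 ≤ w.1 ∧ v.1 * w.2 - v.2 * w.1 < 0 ∧ p + v ∈ Hset n ∧ p + w ∉ Hset n ∧
    ∀ ms, IsMinsl n Λ p ms → ∃ s t : ℝ, 0 ≤ s ∧ 0 ≤ t ∧ ms = s • v + t • w

theorem isUpperSet_Hset (n : ℝ) : IsUpperSet (Hset n) := by
  rintro q r ⟨hqr₁, hqr₂⟩ ⟨hq₁, hq₂, hq⟩
  exact ⟨hq₁.trans hqr₁, hq₂.trans hqr₂, hq.trans (mul_le_mul hqr₁ hqr₂ hq₂ (hq₁.trans hqr₁))⟩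

theorem left_mem_latticeOf (v w : ℝ × ℝ) : v ∈ latticeOf v w :=
  ⟨1, 0, by simp⟩

theorem exists_nonneg_smul_add_smul_of_slopeLE (hvw : v.1 * w.2 - v.2 * w.1 < 0)
    (hwu : slopeLE w u) (huv : slopeLE u v) :
    ∃ s t : ℝ, 0 ≤ s ∧ 0 ≤ t ∧ u = s • v + t • w := by
  have cramer : (v.1 * w.2 - v.2 * w.1) • u =
      (u.1 * w.2 - u.2 * w.1) • v + (v.1 * u.2 - v.2 * u.1) • w := by
    ext <;> simp only [Prod.fst_add, Prod.snd_add, Prod.smul_fst, Prod.smul_snd, smul_eq_mul] <;>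
      ring
  have hdet_uw : u.1 * w.2 - u.2 * w.1 ≤ 0 := by unfold slopeLE at hwu; linarith
  have hdet_vu : v.1 * u.2 - v.2 * u.1 ≤ 0 := by unfold slopeLE at huv; linarith
  refine ⟨(v.1 * w.2 - v.2 * w.1)⁻¹ * (u.1 * w.2 - u.2 * w.1),
    (v.1 * w.2 - v.2 * w.1)⁻¹ * (v.1 * u.2 - v.2 * u.1),
    mul_nonneg_of_nonpos_of_nonpos (inv_nonpos.2 hvw.le) hdet_uw,
    mul_nonneg_of_nonpos_of_nonpos (inv_nonpos.2 hvw.le) hdet_vu, ?_⟩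
  rw [mul_smul, mul_smul, ← smul_add, ← cramer, inv_smul_smul₀ hvw.ne]

namespace IsStdBasis

theorem left_mem (h : IsStdBasis Λ b₁ b₂) : b₁ ∈ Λ :=
  h.1 ▸ left_mem_latticeOf b₁ b₂

theorem fst_right_eq_zero (h : IsStdBasis Λ b₁ b₂) : b₂.1 = 0 :=
  h.2.1

theorem fst_left_pos (h : IsStdBasis Λ b₁ b₂) : 0 < b₁.1 :=
  h.2.2.1

theorem snd_right_pos (h : IsStdBasis Λ b₁ b₂) : 0 < b₂.2 :=
  h.2.2.2.1

theorem left_nonneg (h : IsStdBasis Λ b₁ b₂) : 0 ≤ b₁ :=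
  ⟨h.fst_left_pos.le, h.2.2.2.2.1⟩

theorem left_ne_zero (h : IsStdBasis Λ b₁ b₂) : b₁ ≠ 0 :=
  fun h₀ => h.fst_left_pos.ne' (congrArg Prod.fst h₀)

theorem det_neg_right_neg (h : IsStdBasis Λ b₁ b₂) :
    b₁.1 * (-b₂).2 - b₁.2 * (-b₂).1 < 0 := by
  simpa [h.fst_right_eq_zero] using mul_pos h.fst_left_pos h.snd_right_pos

theorem neg_right_slopeLE (h : IsStdBasis Λ b₁ b₂) (hu : 0 ≤ u.1) : slopeLE (-b₂) u := by
  simpa [slopeLE, h.fst_right_eq_zero] using mul_nonneg h.snd_right_pos.le hu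

theorem add_left_mem_Hset (h : IsStdBasis Λ b₁ b₂) (hp : p ∈ Hset n) : p + b₁ ∈ Hset n :=
  isUpperSet_Hset n (le_add_of_nonneg_right h.left_nonneg) hp

theorem slopeLE_left_of_isMinsl (h : IsStdBasis Λ b₁ b₂) (hp : p ∈ Hset n)
    (hu : IsMinsl n Λ p u) : slopeLE u b₁ := by
  obtain ⟨-, -, -, -, -, hu_min⟩ := hu
  exact hu_min b₁ h.left_mem h.left_ne_zero h.fst_left_pos.le (h.add_left_mem_Hset hp)

end IsStdBasis

theorem statement18_general (h : IsStdBasis Λ b₁ b₂) (hp : p ∈ Hset n) (hpb : p - b₂ ∉ Hset n) :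
    IsRightSearchBasis n Λ p b₁ (-b₂) := by
  refine ⟨h.fst_left_pos, by simp [h.fst_right_eq_zero], h.det_neg_right_neg,
    h.add_left_mem_Hset hp, by rwa [← sub_eq_add_neg], fun ms hms => ?_⟩
  have hms_fst : 0 ≤ ms.1 := hms.2.2.1
  exact exists_nonneg_smul_add_smul_of_slopeLE h.det_neg_right_neg
    (h.neg_right_slopeLE hms_fst) (h.slopeLE_left_of_isMinsl hp hms)

end

/-- If `(b₁, b₂)` is the standard basis of a rational lattice `Λ` and `p ∈ H_n` with
`p - b₂ ∉ H_n`, then `(b₁, -b₂)` is a right search basis for `p`: `(b₁)ₓ > 0`,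
`(-b₂)ₓ ≥ 0`, `det(b₁, -b₂) < 0`, `p + b₁ ∈ H_n`, `p + (-b₂) ∉ H_n`, and `Minsl(p)`
lies in the closed cone generated by `{b₁, -b₂}`. -/
theorem statement18 (n : ℝ) (hn : 0 < n) (b₁ b₂ : ℝ × ℝ)
    (hrat1 : ratPoint b₁) (hrat2 : ratPoint b₂)
    (hstd : IsStdBasis (latticeOf b₁ b₂) b₁ b₂)
    (p : ℝ × ℝ) (hp : p ∈ Hset n) (hpb : p - b₂ ∉ Hset n)
    (ms : ℝ × ℝ) (hms : IsMinsl n (latticeOf b₁ b₂) p ms) :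
    0 < b₁.1 ∧ 0 ≤ (-b₂).1 ∧
    b₁.1 * (-b₂).2 - b₁.2 * (-b₂).1 < 0 ∧
    p + b₁ ∈ Hset n ∧ p + (-b₂) ∉ Hset n ∧
    ∃ s t : ℝ, 0 ≤ s ∧ 0 ≤ t ∧ ms = s • b₁ + t • (-b₂) := by
  obtain ⟨hfst, hfst', hdet, hmem, hnot_mem, hcone⟩ := statement18_general hstd hp hpb
  exact ⟨hfst, hfst', hdet, hmem, hnot_mem, hcone ms hms⟩

end
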